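/- Let 𝔅 be a homothecy invariant basis of nonempty bounded open convex subsets of ℝⁿ, and let μ, ν be locally finite nonnegative Borel measures on ℝⁿ, with μ nonzero and doubling with respect to 𝔅. If there exists c > 0 such that ν({x ∈ ℝⁿ : M_{𝔅,μ}(1_E)(x) > 1/2}) ≤ c·ν(E) for every Borel set E, then 𝔅 differentiates L^∞(ν) with respect to μ: for every bounded Borel measurable function f on ℝⁿ, for ν-almost every x ∈ ℝⁿ, every sequence (B_k) of sets in 𝔅 with x ∈ B_k, μ(B_k) > 0, and diam(B_k) → 0 satisfies (1/μ(B_k)) ∫_{B_k} f dμ → f(x). -/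

import Mathlib

open MeasureTheory Set Filter
open scoped ENNReal Topology Pointwise

noncomputable section

/-- The maximal operator `M_{𝔅,μ}` associated to a measure `μ` and a collection `𝔅`
of subsets of `ℝⁿ`, applied to `f` at the point `x` (valued in `ℝ≥0∞`; it equals `0`
outside the union of `𝔅`). -/
noncomputable def maxOp {n : ℕ} (μ : Measure (EuclideanSpace ℝ (Fin n)))
    (𝔅 : Set (Set (EuclideanSpace ℝ (Fin n))))
    (f : EuclideanSpace ℝ (Fin n) → ℝ) (x : EuclideanSpace ℝ (Fin n)) : ℝ≥0∞ :=
  ⨆ (B : Set (EuclideanSpace ℝ (Fin n))) (_ : B ∈ 𝔅) (_ : x ∈ B) (_ : 0 < μ B),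
    (∫⁻ y in B, ENNReal.ofReal |f y| ∂μ) / μ B

/-- A collection of sets is homothecy invariant if it is closed under translations and
positive dilations. -/
def HomothecyInvariant {n : ℕ} (𝔅 : Set (Set (EuclideanSpace ℝ (Fin n)))) : Prop :=
  ∀ B ∈ 𝔅, (∀ y : EuclideanSpace ℝ (Fin n), y +ᵥ B ∈ 𝔅) ∧ (∀ s : ℝ, 0 < s → s • B ∈ 𝔅)

/-- `μ` is doubling with respect to the collection `𝔅`, with constant `Δ`: whenever
`B ∈ 𝔅` and a translate of the dilate `2·B` contains `B`, its measure is at most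
`Δ·μ(B)`. -/
def DoublingWrt {n : ℕ} (μ : Measure (EuclideanSpace ℝ (Fin n)))
    (𝔅 : Set (Set (EuclideanSpace ℝ (Fin n)))) (Δ : ℝ) : Prop :=
  ∀ B ∈ 𝔅, ∀ σ : EuclideanSpace ℝ (Fin n),
    B ⊆ σ +ᵥ (2 : ℝ) • B → μ (σ +ᵥ (2 : ℝ) • B) ≤ ENNReal.ofReal Δ * μ B

/-- A member of a basis of convex sets: nonempty, bounded, open and convex. -/
def IsConvexBasisSet {n : ℕ} (B : Set (EuclideanSpace ℝ (Fin n))) : Prop :=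
  B.Nonempty ∧ Bornology.IsBounded B ∧ IsOpen B ∧ Convex ℝ B

/-- An open axis-parallel rectangle in `ℝⁿ`. -/
def IsAxisRect {n : ℕ} (R : Set (EuclideanSpace ℝ (Fin n))) : Prop :=
  ∃ a b : Fin n → ℝ, (∀ i, a i < b i) ∧ R = {x | ∀ i, x i ∈ Set.Ioo (a i) (b i)}

/-- An open rectangle (possibly rotated rectangular parallelepiped) in `ℝⁿ`:
the image of an open axis-parallel rectangle under a rigid motion. -/
def IsRect {n : ℕ} (R : Set (EuclideanSpace ℝ (Fin n))) : Prop :=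
  ∃ (f : EuclideanSpace ℝ (Fin n) ≃ᵢ EuclideanSpace ℝ (Fin n))
    (S : Set (EuclideanSpace ℝ (Fin n))), IsAxisRect S ∧ R = f '' S

/-- An open axis-parallel cube in `ℝⁿ`. -/
def IsAxisCube {n : ℕ} (C : Set (EuclideanSpace ℝ (Fin n))) : Prop :=
  ∃ (a : Fin n → ℝ) (s : ℝ), 0 < s ∧ C = {x | ∀ i, x i ∈ Set.Ioo (a i) (a i + s)}

/-- `M_{𝔅,μ}` is bounded on `L^p(ν)`. -/
def BoundedOnLp {n : ℕ} (μ ν : Measure (EuclideanSpace ℝ (Fin n)))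
    (𝔅 : Set (Set (EuclideanSpace ℝ (Fin n)))) (p : ℝ) : Prop :=
  ∃ C : ℝ≥0∞, C ≠ ⊤ ∧ ∀ f : EuclideanSpace ℝ (Fin n) → ℝ, Measurable f →
    ∫⁻ x, maxOp μ 𝔅 f x ^ p ∂ν ≤ C * ∫⁻ x, ENNReal.ofReal |f x| ^ p ∂ν

/-- The Tauberian condition for `M_{𝔅,μ}` at level `γ`, with constant `c`, with respect
to the measure `ν`. -/
def TauberianCond {n : ℕ} (μ ν : Measure (EuclideanSpace ℝ (Fin n)))
    (𝔅 : Set (Set (EuclideanSpace ℝ (Fin n)))) (γ c : ℝ) : Prop :=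
  ∀ E : Set (EuclideanSpace ℝ (Fin n)), MeasurableSet E →
    ν {x | ENNReal.ofReal γ < maxOp μ 𝔅 (E.indicator 1) x} ≤ ENNReal.ofReal c * ν E

/-- The standard open dyadic box of scale `2^k` and position `m` in `ℝⁿ`. -/
def stdBox (n : ℕ) (k : ℤ) (m : Fin n → ℤ) : Set (Fin n → ℝ) :=
  {x | ∀ i, (m i : ℝ) * 2 ^ k < x i ∧ x i < ((m i : ℝ) + 1) * 2 ^ k}

/-- A parametrization of a rectangular grid: a rigid motion composed with a positive
diagonal scaling. The image of the standard unit box under such a map is a rectangle. -/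
def IsRectParam {n : ℕ} (T : (Fin n → ℝ) → EuclideanSpace ℝ (Fin n)) : Prop :=
  ∃ (f : EuclideanSpace ℝ (Fin n) ≃ᵢ EuclideanSpace ℝ (Fin n)) (l : Fin n → ℝ),
    (∀ i, 0 < l i) ∧
    ∀ x, T x = f ((WithLp.equiv 2 (Fin n → ℝ)).symm (fun i => l i * x i))

/-- The dyadic mesh generated by a rectangle parametrized by `T`. -/
def dyadicMesh {n : ℕ} (T : (Fin n → ℝ) → EuclideanSpace ℝ (Fin n)) :
    Set (Set (EuclideanSpace ℝ (Fin n))) :=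
  {S | ∃ (k : ℤ) (m : Fin n → ℤ), S = T '' stdBox n k m}

/-- `S` is a dyadic descendant of the rectangle `R`, `s` generations inside `R`. -/
def DyadicDescendant {n : ℕ} (R S : Set (EuclideanSpace ℝ (Fin n))) (s : ℕ) : Prop :=
  ∃ T : (Fin n → ℝ) → EuclideanSpace ℝ (Fin n), IsRectParam T ∧
    T '' stdBox n 0 0 = R ∧
    ∃ m : Fin n → ℤ, (∀ i, 0 ≤ m i ∧ m i < 2 ^ s) ∧ S = T '' stdBox n (-(s : ℤ)) m

/-- The family of all homothetic copies (translates and positive dilates) of `R₀`. -/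
def homCopies {n : ℕ} (R₀ : Set (EuclideanSpace ℝ (Fin n))) :
    Set (Set (EuclideanSpace ℝ (Fin n))) :=
  {S | ∃ (y : EuclideanSpace ℝ (Fin n)) (s : ℝ), 0 < s ∧ S = y +ᵥ s • R₀}

/-- Iterated halo sets `H_β^k(E)`: `H_β^0(E) = E` and
`H_β^{k+1}(E) = {x : M_{𝔊,μ}(1_{H_β^k(E)})(x) ≥ β}`. -/
def Hiter {n : ℕ} (μ : Measure (EuclideanSpace ℝ (Fin n)))
    (𝔊 : Set (Set (EuclideanSpace ℝ (Fin n)))) (β : ℝ)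
    (E : Set (EuclideanSpace ℝ (Fin n))) : ℕ → Set (EuclideanSpace ℝ (Fin n))
  | 0 => E
  | k + 1 => {x | ENNReal.ofReal β ≤ maxOp μ 𝔊 ((Hiter μ 𝔊 β E k).indicator 1) x}

/-- The Muckenhoupt `A_{p,𝔅}` condition for a weight `w` (with respect to Lebesgue
measure); here `1 - p/(p-1) = 1 - p'`. -/
def MuckenhouptAp {n : ℕ} (𝔅 : Set (Set (EuclideanSpace ℝ (Fin n))))
    (w : EuclideanSpace ℝ (Fin n) → ℝ) (p : ℝ) : Prop :=
  ∃ C : ℝ≥0∞, C ≠ ⊤ ∧ ∀ B ∈ 𝔅,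
    ((∫⁻ x in B, ENNReal.ofReal (w x) ∂volume) / volume B) *
      (((∫⁻ x in B, ENNReal.ofReal (w x) ^ (1 - p / (p - 1)) ∂volume) / volume B) ^ (p - 1))
      ≤ C

/-- `𝔅` is a Muckenhoupt basis: for every `1 < p < ∞` and every weight `w ∈ A_{p,𝔅}`,
the maximal operator `M_𝔅` is bounded on `L^p(w)`. -/
def MuckenhouptBasis {n : ℕ} (𝔅 : Set (Set (EuclideanSpace ℝ (Fin n)))) : Prop :=
  ∀ p : ℝ, 1 < p → ∀ w : EuclideanSpace ℝ (Fin n) → ℝ, (∀ x, 0 ≤ w x) →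
    LocallyIntegrable w volume → MuckenhouptAp 𝔅 w p →
    BoundedOnLp volume (volume.withDensity fun x => ENNReal.ofReal (w x)) 𝔅 p

end

/-!
Suppose `μ (B ∩ E) ≤ γ * μ B` with `B ∈ 𝔅` and `γ < 1`. By doubling, `μ`-almost every `z ∈ B ∩ E`
is a density point of `E` along the homothetic copies of `B` shrinking towards `z`. Boundaries of
sets of `𝔅` are `μ`-null, so the proportion of `Eᶜ` in such a copy varies continuously with the
scale, and for some copy it is exactly `(1 - γ) / 2`. These copies lie in `B` and in the halo of
`E`, the superlevel set `{M 1_E > γ}`; a Vitali covering argument then shows that within `B` the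
halo is larger than `E` by a factor `q > 1` independent of `B` and `E`. The engulfing property
behind the covering argument comes from a center of `B` relative to which `B - B` is contained in a
multiple of `B`.

Iterating the halo `k` times therefore fills every `B` with `μ (B ∩ E) > ε * μ B`, for any
prescribed `ε > 0`, at the cost of a factor `c ^ k` in `ν`-measure. Applied to `E \ K` for closed
`K ⊆ E` with `ν (E \ K)` small, this shows that `E` has density zero at `ν`-almost every point
outside `E`. Hence measurable functions are approximately continuous `ν`-almost everywhere, and for
bounded functions the averages converge.
-/

open AffineMap (homothety)
open Module (finrank)
open Metric (closedBall)

section ConvexGeometry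

variable {E : Type*} [NormedAddCommGroup E] [NormedSpace ℝ E]

/- Helly's theorem applied to the copies of `K` shrunk by `d / (d + 1)` towards its points: any
`d + 1` of them share the centroid of the corresponding points. -/
theorem exists_forall_exists_smul_eq_add_smul [FiniteDimensional ℝ E] {K : Set E}
    (hne : K.Nonempty) (hcv : Convex ℝ K) (hK : IsCompact K) :
    ∃ p, ∀ x ∈ K, ∃ w ∈ K, ((finrank ℝ E : ℝ) + 1) • p = x + (finrank ℝ E : ℝ) • w := by
  set d := finrank ℝ E
  have hd : (d : ℝ) + 1 ≠ 0 := by positivity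
  let F : K → Set E := fun x ↦ (fun w ↦ ((d : ℝ) + 1)⁻¹ • ((x : E) + (d : ℝ) • w)) '' K
  have hF : (⋂ x, F x).Nonempty := by
    refine Convex.helly_theorem_compact' (𝕜 := ℝ) (fun x ↦ ?_)
      (fun x ↦ hK.image (by fun_prop)) fun I hI ↦ ?_
    · have := ((hcv.smul (d : ℝ)).vadd (x : E)).smul ((d : ℝ) + 1)⁻¹
      simpa only [← image_smul, ← image_vadd, image_image, vadd_eq_add] using this
    obtain ⟨x₀, hx₀⟩ := hne
    obtain ⟨e⟩ : Nonempty (I ↪ Fin (d + 1)) :=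
      Function.Embedding.nonempty_of_card_le (by simpa using hI)
    let g : Fin (d + 1) → K := Function.extend e Subtype.val fun _ ↦ ⟨x₀, hx₀⟩
    refine ⟨((d : ℝ) + 1)⁻¹ • ∑ j, (g j : E), mem_iInter₂.2 fun x hx ↦ ?_⟩
    obtain ⟨i, rfl⟩ : ∃ i, g i = x := ⟨e ⟨x, hx⟩, e.injective.extend_apply _ _ _⟩
    obtain hd0 | hd0 := eq_or_ne d 0
    · have : Subsingleton E := Module.finrank_zero_iff.1 hd0
      exact ⟨x₀, hx₀, Subsingleton.elim _ _⟩
    have hd0' : (d : ℝ) ≠ 0 := Nat.cast_ne_zero.2 hd0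
    refine ⟨∑ j : Fin d, (d : ℝ)⁻¹ • (g (i.succAbove j) : E),
      hcv.sum_mem (fun _ _ ↦ by positivity) (by simp [hd0']) fun j _ ↦ (g _).2, ?_⟩
    simp only [← Finset.smul_sum, smul_inv_smul₀ hd0', Fin.sum_univ_succAbove _ i]
  obtain ⟨p, hp⟩ := hF
  refine ⟨p, fun x hx ↦ ?_⟩
  obtain ⟨w, hw, rfl⟩ := mem_iInter.1 hp ⟨x, hx⟩
  exact ⟨w, hw, smul_inv_smul₀ hd _⟩

theorem exists_mem_forall_add_inv_smul_sub_mem [FiniteDimensional ℝ E] {B : Set E}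
    (hne : B.Nonempty) (hcv : Convex ℝ B) (hbdd : Bornology.IsBounded B) (ho : IsOpen B) :
    ∃ p ∈ B, ∀ x ∈ B, ∀ y ∈ B, p + ((finrank ℝ E : ℝ) + 1)⁻¹ • (x - y) ∈ B := by
  have : ProperSpace E := FiniteDimensional.proper ℝ E
  set d : ℝ := (finrank ℝ E : ℝ)
  have hd : 0 < d + 1 := by positivity
  obtain ⟨p, hp⟩ :=
    exists_forall_exists_smul_eq_add_smul hne.closure hcv.closure hbdd.isCompact_closure
  have hmem : ∀ x ∈ B, ∀ y ∈ B, p + (d + 1)⁻¹ • (x - y) ∈ B := by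
    intro x hx y hy
    obtain ⟨w, hw, hpw⟩ := hp y (subset_closure hy)
    have hcombo : (d + 1)⁻¹ • x + (d * (d + 1)⁻¹) • w ∈ B := by
      rw [← ho.interior_eq] at hx ⊢
      exact hcv.combo_interior_closure_mem_interior hx hw (by positivity) (by positivity)
        (by field_simp; ring)
    have hp' : p = (d + 1)⁻¹ • (y + d • w) := by rw [← hpw, inv_smul_smul₀ hd.ne']
    convert hcombo using 1
    rw [hp']
    module
  obtain ⟨x, hx⟩ := hne
  exact ⟨p, by simpa using hmem x hx x hx, hmem⟩

theorem homothety_image_eq_vadd_smul (z : E) (t : ℝ) (B : Set E) :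
    homothety z t '' B = ((1 - t) • z) +ᵥ t • B := by
  rw [← image_smul, ← image_vadd, image_image]
  refine image_congr fun x _ ↦ ?_
  simp only [AffineMap.homothety_apply, vsub_eq_sub, vadd_eq_add]
  module

theorem homothety_image_closedBall (z q : E) {t : ℝ} (ht : 0 < t) (r : ℝ) :
    homothety z t '' closedBall q r = closedBall (homothety z t q) (t * r) := by
  rw [homothety_image_eq_vadd_smul, smul_closedBall' ht.ne', Metric.vadd_closedBall,
    Real.norm_of_nonneg ht.le]
  congr 1
  simp only [AffineMap.homothety_apply, vsub_eq_sub, vadd_eq_add]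
  module

theorem homothety_image_subset_closedBall {B : Set E} {z : E} {R : ℝ} (hB : B ⊆ closedBall z R)
    {t : ℝ} (ht : 0 < t) : homothety z t '' B ⊆ closedBall z (t * R) := by
  simpa only [homothety_image_closedBall z z ht, AffineMap.homothety_apply_same] using
    image_mono (f := homothety z t) hB

theorem mem_homothety_image {B : Set E} {z x : E} {t : ℝ} (ht : t ≠ 0) :
    x ∈ homothety z t '' B ↔ homothety z t⁻¹ x ∈ B := by
  have hinv (s r : ℝ) (h : s * r = 1) (y : E) : homothety z s (homothety z r y) = y := by
    rw [← AffineMap.homothety_mul_apply, h, AffineMap.homothety_one, AffineMap.id_apply]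
  refine ⟨?_, fun hx ↦ ⟨_, hx, hinv _ _ (mul_inv_cancel₀ ht) x⟩⟩
  rintro ⟨y, hy, rfl⟩
  rwa [hinv _ _ (inv_mul_cancel₀ ht)]

theorem homothety_image_mul (z : E) (s t : ℝ) (B : Set E) :
    homothety z (s * t) '' B = homothety z s '' (homothety z t '' B) := by
  rw [AffineMap.homothety_mul, AffineMap.coe_comp, image_comp]

theorem homothety_image_mono {B : Set E} (hB : Convex ℝ B) {z : E} (hz : z ∈ B) {s t : ℝ}
    (hs : 0 ≤ s) (ht : 0 < t) (hst : s ≤ t) : homothety z s '' B ⊆ homothety z t '' B := by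
  rw [← mul_div_cancel₀ s ht.ne', homothety_image_mul]
  refine image_mono ?_
  rintro _ ⟨x, hx, rfl⟩
  rw [AffineMap.homothety_eq_lineMap]
  exact hB.lineMap_mem hz hx ⟨by positivity, div_le_one_of_le₀ hst ht.le⟩

theorem homothety_image_subset {B : Set E} (hB : Convex ℝ B) (ho : IsOpen B) {z : E}
    (hz : z ∈ closure B) {t : ℝ} (ht₀ : 0 < t) (ht₁ : t ≤ 1) : homothety z t '' B ⊆ B := by
  rintro _ ⟨x, hx, rfl⟩
  rw [← ho.interior_eq] at hx ⊢
  have := hB.combo_closure_interior_mem_interior hz hx (sub_nonneg.2 ht₁) ht₀ (by ring)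
  convert this using 1
  simp only [AffineMap.homothety_apply, vsub_eq_sub, vadd_eq_add]
  module

theorem homothety_image_sub_homothety_image (z : E) (t : ℝ) (B : Set E) :
    homothety z t '' B - homothety z t '' B = t • (B - B) := by
  rw [← image2_sub, ← image2_sub, ← image_smul, image_image2, image2_image_left, image2_image_right]
  refine image2_congr fun x _ y _ ↦ ?_
  simp only [AffineMap.homothety_apply, vsub_eq_sub, vadd_eq_add]
  module

/- With `x - w = lam • (b - b')` for `x ∈ A`, `w ∈ A ∩ B` and `b, b' ∈ B`, the point
`v = p + N⁻¹ • (b - b')` lies in `B` and `x = w + (lam * N) • (v - p)`. -/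
theorem subset_homothety_image_of_sub_subset {A B : Set E} (hB : Convex ℝ B) {p : E} {N lam : ℝ}
    (hN : 0 < N) (hlam : 0 ≤ lam) (hp : ∀ x ∈ B, ∀ y ∈ B, p + N⁻¹ • (x - y) ∈ B)
    (hAB : (A ∩ B).Nonempty) (hsub : A - A ⊆ lam • (B - B)) :
    A ⊆ homothety p (1 + lam * N) '' B := by
  obtain ⟨w, hwA, hwB⟩ := hAB
  intro x hx
  obtain ⟨_, ⟨b, hb, b', hb', rfl⟩, hxw⟩ := hsub (sub_mem_sub hx hwA)
  have : 0 < 1 + lam * N := by positivity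
  refine ⟨(1 + lam * N)⁻¹ • w + (lam * N * (1 + lam * N)⁻¹) • (p + N⁻¹ • (b - b')),
    hB hwB (hp b hb b' hb') (by positivity) (by positivity) (by field_simp), ?_⟩
  obtain rfl : x = lam • (b - b') + w := by rw [← sub_eq_iff_eq_add]; exact hxw.symm
  simp only [AffineMap.homothety_apply, vsub_eq_sub, vadd_eq_add]
  match_scalars <;> field_simp
  ring

theorem eventually_mem_iff_of_notMem_frontier {X : Type*} [TopologicalSpace X] {s : Set X} {x : X}
    (hx : x ∉ frontier s) : ∀ᶠ y in 𝓝 x, y ∈ s ↔ x ∈ s := by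
  obtain hx | hx : x ∈ interior s ∪ interior sᶜ := compl_frontier_eq_union_interior (s := s) ▸ hx
  · filter_upwards [mem_interior_iff_mem_nhds.1 hx] with y hy
    exact iff_of_true hy (interior_subset hx)
  · filter_upwards [mem_interior_iff_mem_nhds.1 hx] with y hy
    exact iff_of_false hy (interior_subset hx)

theorem frontier_homothety_image (z : E) {t : ℝ} (ht : t ≠ 0) (B : Set E) :
    frontier (homothety z t '' B) = homothety z t '' frontier B := by
  have hpre (S : Set E) : homothety z t '' S = homothety z t⁻¹ ⁻¹' S :=
    ext fun x ↦ mem_homothety_image ht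
  have hopen := AffineMap.homothety_isOpenMap z t⁻¹ (inv_ne_zero ht)
  rw [hpre, hpre,
    hopen.preimage_frontier_eq_frontier_preimage (AffineMap.homothety_continuous z _)]

theorem continuousAt_measure_homothety_image [ProperSpace E] [MeasurableSpace E] [BorelSpace E]
    {μ : Measure E} [IsLocallyFiniteMeasure μ] {B : Set E} (hbdd : Bornology.IsBounded B)
    (ho : IsOpen B) (z : E) {t₀ : ℝ} (ht₀ : 0 < t₀)
    (hfr : μ (frontier (homothety z t₀ '' B)) = 0) :
    ContinuousAt (fun t ↦ μ (homothety z t '' B)) t₀ := by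
  have hpre : ∀ᶠ t in 𝓝 t₀, homothety z t⁻¹ ⁻¹' B = homothety z t '' B := by
    filter_upwards [eventually_ne_nhds ht₀.ne'] with t ht
    exact ext fun x ↦ (mem_homothety_image ht).symm
  refine ContinuousAt.congr ?_ (hpre.mono fun t ht ↦ congrArg μ ht)
  have hmeas (t : ℝ) : MeasurableSet (homothety z t⁻¹ ⁻¹' B) :=
    (ho.preimage (AffineMap.homothety_continuous z _)).measurableSet
  obtain ⟨R, hR₀, hR⟩ := hbdd.subset_closedBall_lt 0 z
  refine tendsto_measure_of_ae_tendsto_indicator _ (hmeas t₀) hmeas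
    (measurableSet_closedBall (x := z) (ε := (t₀ + 1) * R)) measure_closedBall_lt_top.ne ?_ ?_
  · filter_upwards [hpre, eventually_gt_nhds ht₀, eventually_lt_nhds (lt_add_one t₀)]
      with t ht ht_pos ht_lt
    rw [ht]
    exact (homothety_image_subset_closedBall hR ht_pos).trans
      (Metric.closedBall_subset_closedBall (by gcongr))
  · filter_upwards [measure_eq_zero_iff_ae_notMem.1 hfr] with x hx
    rw [frontier_homothety_image z ht₀.ne', mem_homothety_image ht₀.ne'] at hx
    have hcont : ContinuousAt (fun t : ℝ ↦ homothety z t⁻¹ x) t₀ := by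
      have := continuousAt_inv₀ ht₀.ne'
      simp only [AffineMap.homothety_apply, vsub_eq_sub, vadd_eq_add]
      fun_prop
    exact hcont.eventually (eventually_mem_iff_of_notMem_frontier hx)

end ConvexGeometry

theorem ae_tendsto_measure_closedBall_diff_div {X : Type*} [PseudoMetricSpace X]
    [SecondCountableTopology X] [MeasurableSpace X] [BorelSpace X] {μ : Measure X}
    [IsUnifLocDoublingMeasure μ] [IsLocallyFiniteMeasure μ] {S : Set X} (hS : MeasurableSet S) :
    ∀ᵐ x ∂μ.restrict S, Tendsto (fun r ↦ μ (closedBall x r \ S) / μ (closedBall x r))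
      (𝓝[>] 0) (𝓝 0) := by
  let v := IsUnifLocDoublingMeasure.vitaliFamily μ 1
  filter_upwards [ae_restrict_of_ae (v.ae_tendsto_measure_inter_div_of_measurableSet hS.compl),
    ae_restrict_mem hS] with x hx hxS
  rw [indicator_of_notMem (notMem_compl_iff.2 hxS)] at hx
  have hballs : Tendsto (fun r ↦ closedBall x r) (𝓝[>] 0) (v.filterAt x) := by
    refine IsUnifLocDoublingMeasure.tendsto_closedBall_filterAt μ _ _ tendsto_id ?_
    filter_upwards [self_mem_nhdsWithin] with r (hr : 0 < r)
    exact Metric.mem_closedBall_self (by simpa using hr.le)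
  simpa only [Function.comp_def, inter_comm Sᶜ, ← Set.sdiff_eq] using hx.comp hballs

section Doubling

/-- A homothecy invariant basis `𝔅` of convex sets for which `μ` is doubling with constant `Δ`. -/
structure IsDoublingConvexBasis {n : ℕ} (μ : Measure (EuclideanSpace ℝ (Fin n)))
    (𝔅 : Set (Set (EuclideanSpace ℝ (Fin n)))) (Δ : ℝ) : Prop where
  isConvexBasisSet : ∀ B ∈ 𝔅, IsConvexBasisSet B
  homothecyInvariant : HomothecyInvariant 𝔅
  doublingWrt : DoublingWrt μ 𝔅 Δ

namespace IsDoublingConvexBasis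

variable {n : ℕ} {μ : Measure (EuclideanSpace ℝ (Fin n))}
  {𝔅 : Set (Set (EuclideanSpace ℝ (Fin n)))} {Δ : ℝ} {B : Set (EuclideanSpace ℝ (Fin n))}

theorem nonempty (h : IsDoublingConvexBasis μ 𝔅 Δ) (hB : B ∈ 𝔅) : B.Nonempty :=
  (h.isConvexBasisSet B hB).1

theorem isBounded (h : IsDoublingConvexBasis μ 𝔅 Δ) (hB : B ∈ 𝔅) : Bornology.IsBounded B :=
  (h.isConvexBasisSet B hB).2.1

theorem isOpen (h : IsDoublingConvexBasis μ 𝔅 Δ) (hB : B ∈ 𝔅) : IsOpen B :=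
  (h.isConvexBasisSet B hB).2.2.1

theorem convex (h : IsDoublingConvexBasis μ 𝔅 Δ) (hB : B ∈ 𝔅) : Convex ℝ B :=
  (h.isConvexBasisSet B hB).2.2.2

theorem measure_ne_top [IsLocallyFiniteMeasure μ] (h : IsDoublingConvexBasis μ 𝔅 Δ)
    (hB : B ∈ 𝔅) : μ B ≠ ∞ :=
  (h.isBounded hB).measure_lt_top.ne

theorem homothety_image_mem (h : IsDoublingConvexBasis μ 𝔅 Δ) (hB : B ∈ 𝔅)
    (z : EuclideanSpace ℝ (Fin n)) {t : ℝ} (ht : 0 < t) : homothety z t '' B ∈ 𝔅 := by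
  rw [homothety_image_eq_vadd_smul]
  exact (h.homothecyInvariant _ ((h.homothecyInvariant B hB).2 t ht)).1 _

theorem measure_homothety_two_pow_image_le (h : IsDoublingConvexBasis μ 𝔅 Δ) (hB : B ∈ 𝔅)
    {p : EuclideanSpace ℝ (Fin n)} (hp : p ∈ B) (m : ℕ) :
    μ (homothety p (2 ^ m : ℝ) '' B) ≤ ENNReal.ofReal Δ ^ m * μ B := by
  induction m with
  | zero => simp
  | succ m ih =>
    have hdouble : homothety p (2 ^ (m + 1) : ℝ) '' B =
        ((1 - 2 : ℝ) • p) +ᵥ (2 : ℝ) • homothety p (2 ^ m : ℝ) '' B := by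
      rw [pow_succ', homothety_image_mul, homothety_image_eq_vadd_smul p 2]
    have hsub : homothety p (2 ^ m : ℝ) '' B ⊆ homothety p (2 ^ (m + 1) : ℝ) '' B :=
      homothety_image_mono (h.convex hB) hp (by positivity) (by positivity)
        (pow_le_pow_right₀ one_le_two m.le_succ)
    rw [hdouble] at hsub ⊢
    calc
      _ ≤ ENNReal.ofReal Δ * μ (homothety p (2 ^ m : ℝ) '' B) :=
        h.doublingWrt _ (h.homothety_image_mem hB p (by positivity)) _ hsub
      _ ≤ ENNReal.ofReal Δ * (ENNReal.ofReal Δ ^ m * μ B) := by gcongr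
      _ = ENNReal.ofReal Δ ^ (m + 1) * μ B := by rw [pow_succ', mul_assoc]

theorem measure_closedBall_two_pow_mul_le (h : IsDoublingConvexBasis μ 𝔅 Δ) (hB : B ∈ 𝔅)
    {q : EuclideanSpace ℝ (Fin n)} {r : ℝ} (hr : 0 ≤ r) (hsub : closedBall q r ⊆ B) (m : ℕ) :
    μ (closedBall q (2 ^ m * r)) ≤ ENNReal.ofReal Δ ^ m * μ B := by
  refine le_trans (measure_mono ?_) (h.measure_homothety_two_pow_image_le hB
    (hsub (Metric.mem_closedBall_self hr)) m)
  have := homothety_image_closedBall q q (pow_pos (zero_lt_two' ℝ) m) r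
  rw [AffineMap.homothety_apply_same] at this
  exact this ▸ image_mono hsub

theorem exists_closedBall_subset (h : IsDoublingConvexBasis μ 𝔅 Δ) (hB : B ∈ 𝔅) :
    ∃ p, ∃ r > 0, closedBall p r ⊆ B := by
  obtain ⟨p, hp⟩ := h.nonempty hB
  exact ⟨p, Metric.nhds_basis_closedBall.mem_iff.1 ((h.isOpen hB).mem_nhds hp)⟩

theorem measure_pos (h : IsDoublingConvexBasis μ 𝔅 Δ) (hμ : μ ≠ 0) (hB : B ∈ 𝔅) : 0 < μ B := by
  obtain ⟨p, r, hr, hpr⟩ := h.exists_closedBall_subset hB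
  refine pos_iff_ne_zero.2 fun hB₀ ↦ hμ ?_
  rw [← Measure.measure_univ_eq_zero, ← nonpos_iff_eq_zero]
  have hcover : (univ : Set (EuclideanSpace ℝ (Fin n))) ⊆ ⋃ m : ℕ, closedBall p (2 ^ m * r) := by
    intro x _
    obtain ⟨m, hm⟩ := pow_unbounded_of_one_lt (dist x p / r) one_lt_two
    exact mem_iUnion.2 ⟨m, ((div_lt_iff₀ hr).1 hm).le⟩
  refine (measure_mono hcover).trans (measure_iUnion_null fun m ↦ ?_).le
  simpa [hB₀] using h.measure_closedBall_two_pow_mul_le hB hr.le hpr m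

theorem isUnifLocDoublingMeasure (h : IsDoublingConvexBasis μ 𝔅 Δ) (hB : B ∈ 𝔅) :
    IsUnifLocDoublingMeasure μ := by
  obtain ⟨p, r, hr, hpr⟩ := h.exists_closedBall_subset hB
  obtain ⟨R, hR, hBR⟩ := (h.isBounded hB).subset_closedBall_lt 0 p
  obtain ⟨m, hm⟩ := pow_unbounded_of_one_lt (2 * R / r) one_lt_two
  rw [div_lt_iff₀ hr] at hm
  refine ⟨⟨(Real.toNNReal Δ) ^ m, ?_⟩⟩
  filter_upwards [self_mem_nhdsWithin] with ε (hε : 0 < ε) x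
  have hεR : 0 < ε / R := by positivity
  set A : Set (EuclideanSpace ℝ (Fin n)) := homothety x (ε / R) '' ((x - p) +ᵥ B)
  have hA : A ∈ 𝔅 := h.homothety_image_mem ((h.homothecyInvariant B hB).1 _) x hεR
  have htranslate (s : ℝ) :
      homothety x (ε / R) '' ((x - p) +ᵥ closedBall p s) = closedBall x (ε / R * s) := by
    rw [Metric.vadd_closedBall, vadd_eq_add, sub_add_cancel, homothety_image_closedBall x x hεR,
      AffineMap.homothety_apply_same]
  have hsubA : closedBall x (ε / R * r) ⊆ A := by
    rw [← htranslate]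
    exact image_mono (vadd_set_mono hpr)
  have hAsub : A ⊆ closedBall x ε := by
    rw [← div_mul_cancel₀ ε hR.ne', ← htranslate]
    exact image_mono (vadd_set_mono hBR)
  calc
    μ (closedBall x (2 * ε)) ≤ μ (closedBall x (2 ^ m * (ε / R * r))) := by
      refine measure_mono (Metric.closedBall_subset_closedBall ?_)
      calc 2 * ε = ε / R * (2 * R) := by field_simp
        _ ≤ ε / R * (2 ^ m * r) := by gcongr
        _ = 2 ^ m * (ε / R * r) := by ring
    _ ≤ ENNReal.ofReal Δ ^ m * μ A :=
      h.measure_closedBall_two_pow_mul_le hA (by positivity) hsubA m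
    _ ≤ ↑(Real.toNNReal Δ ^ m) * μ (closedBall x ε) := by
      rw [ENNReal.coe_pow]
      exact mul_le_mul_right (measure_mono hAsub) _

theorem exists_measure_closedBall_le_mul_measure_homothety_image
    (h : IsDoublingConvexBasis μ 𝔅 Δ) (hB : B ∈ 𝔅) (z : EuclideanSpace ℝ (Fin n)) (ρ : ℝ) :
    ∃ K : ℝ≥0∞, K ≠ ∞ ∧
      ∀ t > 0, μ (closedBall z (t * ρ)) ≤ K * μ (homothety z t '' B) := by
  obtain ⟨q, r, hr, hqr⟩ := h.exists_closedBall_subset hB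
  obtain ⟨m, hm⟩ := pow_unbounded_of_one_lt ((ρ + dist z q) / r) one_lt_two
  rw [div_lt_iff₀ hr] at hm
  refine ⟨ENNReal.ofReal Δ ^ m, by finiteness, fun t ht ↦ le_trans (measure_mono ?_)
    (h.measure_closedBall_two_pow_mul_le (h.homothety_image_mem hB z ht) (by positivity)
      (homothety_image_closedBall z q ht r ▸ image_mono hqr) m)⟩
  refine Metric.closedBall_subset_closedBall' ?_
  rw [dist_comm, dist_homothety_center, Real.norm_of_nonneg ht.le, ← mul_add,
    mul_left_comm (2 ^ m)]
  gcongr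

theorem ae_tendsto_measure_homothety_image_diff_div [IsLocallyFiniteMeasure μ]
    (h : IsDoublingConvexBasis μ 𝔅 Δ) (hμ : μ ≠ 0) (hB : B ∈ 𝔅)
    {S : Set (EuclideanSpace ℝ (Fin n))} (hS : MeasurableSet S) :
    ∀ᵐ z ∂μ.restrict S, Tendsto
      (fun t : ℝ ↦ μ (homothety z t '' B \ S) / μ (homothety z t '' B)) (𝓝[>] 0) (𝓝 0) := by
  have := h.isUnifLocDoublingMeasure hB
  filter_upwards [ae_tendsto_measure_closedBall_diff_div hS] with z hz
  obtain ⟨R, hR, hBR⟩ := (h.isBounded hB).subset_closedBall_lt 0 z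
  obtain ⟨K, hK, hcompare⟩ :=
    h.exists_measure_closedBall_le_mul_measure_homothety_image hB z R
  have hradius : Tendsto (fun t : ℝ ↦ t * R) (𝓝[>] 0) (𝓝[>] 0) := by
    have hcont : Tendsto (fun t : ℝ ↦ t * R) (𝓝 0) (𝓝 0) :=
      Continuous.tendsto' (by fun_prop) _ _ (zero_mul R)
    refine tendsto_nhdsWithin_iff.2 ⟨hcont.mono_left nhdsWithin_le_nhds, ?_⟩
    filter_upwards [self_mem_nhdsWithin] with t (ht : 0 < t) using mul_pos ht hR
  have hbound := ENNReal.Tendsto.const_mul (hz.comp hradius) (Or.inr hK)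
  rw [mul_zero] at hbound
  refine tendsto_of_tendsto_of_tendsto_of_le_of_le' tendsto_const_nhds hbound
    (Eventually.of_forall fun t ↦ zero_le) ?_
  filter_upwards [self_mem_nhdsWithin] with t (ht : 0 < t)
  have hsub := homothety_image_subset_closedBall hBR ht
  have hQ₀ := (h.measure_pos hμ (h.homothety_image_mem hB z ht)).ne'
  have hball₀ : μ (closedBall z (t * R)) ≠ 0 :=
    ((pos_iff_ne_zero.2 hQ₀).trans_le (measure_mono hsub)).ne'
  rw [ENNReal.div_le_iff hQ₀ (h.measure_ne_top (h.homothety_image_mem hB z ht))]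
  calc
    μ (homothety z t '' B \ S) ≤ μ (closedBall z (t * R) \ S) :=
      measure_mono (sdiff_subset_sdiff_left hsub)
    _ = μ (closedBall z (t * R) \ S) / μ (closedBall z (t * R)) * μ (closedBall z (t * R)) :=
      (ENNReal.div_mul_cancel hball₀ measure_closedBall_lt_top.ne).symm
    _ ≤ μ (closedBall z (t * R) \ S) / μ (closedBall z (t * R)) *
        (K * μ (homothety z t '' B)) := by gcongr; exact hcompare t ht
    _ = K * (μ (closedBall z (t * R) \ S) / μ (closedBall z (t * R))) *
        μ (homothety z t '' B) := by ring

/- Every homothetic copy of `B` shrunk towards `z ∈ frontier B` lies in `B`, hence misses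
`frontier B`, so `z` is not a density point of `frontier B`. -/
theorem measure_frontier_eq_zero [IsLocallyFiniteMeasure μ] (h : IsDoublingConvexBasis μ 𝔅 Δ)
    (hμ : μ ≠ 0) (hB : B ∈ 𝔅) : μ (frontier B) = 0 := by
  have hdensity := h.ae_tendsto_measure_homothety_image_diff_div hμ hB
    (isClosed_frontier (s := B)).measurableSet
  rw [← Measure.restrict_eq_zero, ← ae_eq_bot, ← eventually_false_iff_eq_bot]
  filter_upwards [hdensity, ae_restrict_mem isClosed_frontier.measurableSet] with z hz hzB
  refine zero_ne_one (tendsto_nhds_unique hz (tendsto_const_nhds.congr' ?_))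
  filter_upwards [Ioc_mem_nhdsGT one_pos] with t ht
  have hQ := h.homothety_image_mem hB z ht.1
  have hsub := homothety_image_subset (h.convex hB) (h.isOpen hB) (frontier_subset_closure hzB)
    ht.1 ht.2
  have hdisj : Disjoint (homothety z t '' B) (frontier B) :=
    (disjoint_frontier_iff_isOpen.2 (h.isOpen hB)).symm.mono_left hsub
  rw [hdisj.sdiff_eq_left, ENNReal.div_self (h.measure_pos hμ hQ).ne' (h.measure_ne_top hQ)]

theorem exists_measure_homothety_image_diff_div_eq [IsLocallyFiniteMeasure μ]
    (h : IsDoublingConvexBasis μ 𝔅 Δ) (hμ : μ ≠ 0) (hB : B ∈ 𝔅)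
    {S : Set (EuclideanSpace ℝ (Fin n))} {z : EuclideanSpace ℝ (Fin n)}
    (hz : Tendsto (fun t : ℝ ↦ μ (homothety z t '' B \ S) / μ (homothety z t '' B))
      (𝓝[>] 0) (𝓝 0))
    {δ : ℝ≥0∞} (hδ₀ : 0 < δ) (hδ : δ ≤ μ (B \ S) / μ B) :
    ∃ t ∈ Ioc (0 : ℝ) 1, μ (homothety z t '' B \ S) / μ (homothety z t '' B) = δ := by
  have hQ {t : ℝ} (ht : t ∈ Ioc (0 : ℝ) 1) : homothety z t '' B ∈ 𝔅 :=
    h.homothety_image_mem hB z ht.1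
  have : IsLocallyFiniteMeasure (μ.restrict Sᶜ) :=
    Measure.isLocallyFiniteMeasure_of_le Measure.restrict_le_self
  have hcont : ContinuousOn
      (fun t : ℝ ↦ μ (homothety z t '' B \ S) / μ (homothety z t '' B)) (Ioc 0 1) := by
    have hdiff : EqOn (fun t : ℝ ↦ μ (homothety z t '' B \ S) / μ (homothety z t '' B))
        (fun t ↦ μ.restrict Sᶜ (homothety z t '' B) / μ (homothety z t '' B)) (Ioc 0 1) :=
      fun t ht ↦ by
        simp only [Measure.restrict_apply (h.isOpen (hQ ht)).measurableSet, Set.sdiff_eq]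
    refine ContinuousOn.congr (fun t ht ↦ ContinuousAt.continuousWithinAt ?_) hdiff
    have hfr := h.measure_frontier_eq_zero hμ (hQ ht)
    refine ENNReal.Tendsto.div
      (continuousAt_measure_homothety_image (h.isBounded hB) (h.isOpen hB) z ht.1
        (Measure.restrict_le_self.absolutelyContinuous hfr))
      (Or.inr (h.measure_pos hμ (hQ ht)).ne')
      (continuousAt_measure_homothety_image (h.isBounded hB) (h.isOpen hB) z ht.1 hfr)
      (Or.inl (h.measure_ne_top (hQ ht)))
  refine isPreconnected_Ioc.intermediate_value_Ioc (right_mem_Ioc.2 one_pos)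
    (le_principal_iff.2 (Ioc_mem_nhdsGT one_pos)) hcont hz ⟨hδ₀, ?_⟩
  simpa using hδ

theorem exists_enlargement (h : IsDoublingConvexBasis μ 𝔅 Δ) (hB : B ∈ 𝔅) :
    ∃ B' : Set (EuclideanSpace ℝ (Fin n)), μ B' ≤ ENNReal.ofReal Δ ^ (n + 2) * μ B ∧
      ∀ A : Set (EuclideanSpace ℝ (Fin n)), ∀ lam ∈ Icc (0 : ℝ) 2,
        (A ∩ B).Nonempty → A - A ⊆ lam • (B - B) → A ⊆ B' := by
  obtain ⟨p, hp, hcenter⟩ := exists_mem_forall_add_inv_smul_sub_mem (h.nonempty hB) (h.convex hB)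
    (h.isBounded hB) (h.isOpen hB)
  rw [finrank_euclideanSpace_fin] at hcenter
  refine ⟨_, h.measure_homothety_two_pow_image_le hB hp (n + 2), fun A lam hlam hAB hsub ↦ ?_⟩
  have hfactor : 1 + lam * ((n : ℝ) + 1) ≤ 2 ^ (n + 2) := by
    have hn : (n : ℝ) + 1 ≤ 2 ^ n := mod_cast n.lt_two_pow_self
    have := mul_le_mul_of_nonneg_right hlam.2 (by positivity : (0 : ℝ) ≤ (n : ℝ) + 1)
    rw [pow_add]
    linarith
  have := hlam.1
  exact (subset_homothety_image_of_sub_subset (h.convex hB) (by positivity) hlam.1 hcenter hAB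
    hsub).trans (homothety_image_mono (h.convex hB) hp (by positivity) (by positivity) hfactor)

theorem measure_le_of_forall_exists_homothety_image (h : IsDoublingConvexBasis μ 𝔅 Δ) (hB : B ∈ 𝔅)
    {G V : Set (EuclideanSpace ℝ (Fin n))} {C : ℝ≥0∞} (hGB : G ⊆ B)
    (hG : ∀ z ∈ G, ∃ t ∈ Ioc (0 : ℝ) 1,
      μ (homothety z t '' B) ≤ C * μ (homothety z t '' B ∩ V)) :
    μ G ≤ ENNReal.ofReal Δ ^ (n + 2) * C * μ V := by
  choose! t ht hV using hG
  set Q : EuclideanSpace ℝ (Fin n) → Set (EuclideanSpace ℝ (Fin n)) :=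
    fun z ↦ homothety z (t z) '' B
  have hQ : ∀ z ∈ G, Q z ∈ 𝔅 := fun z hz ↦ h.homothety_image_mem hB z (ht z hz).1
  have hzQ : ∀ z ∈ G, z ∈ Q z := fun z hz ↦ ⟨z, hGB hz, AffineMap.homothety_apply_same z _⟩
  have hQQ (z : EuclideanSpace ℝ (Fin n)) : Q z - Q z = t z • (B - B) :=
    homothety_image_sub_homothety_image z (t z) B
  obtain ⟨u, huG, hudisj, hucov⟩ := Vitali.exists_disjoint_subfamily_covering_enlargement Q G t 2
    one_lt_two (fun z hz ↦ (ht z hz).1.le) 1 (fun z hz ↦ (ht z hz).2) fun z hz ↦ ⟨z, hzQ z hz⟩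
  have hucount : u.Countable := hudisj.countable_of_isOpen
    (fun z hz ↦ h.isOpen (hQ z (huG hz))) fun z hz ↦ ⟨z, hzQ z (huG hz)⟩
  choose! Q' hQ' hengulf using fun z hz ↦ h.exists_enlargement (hQ z hz)
  have hcover : G ⊆ ⋃ b ∈ u, Q' b := by
    intro z hz
    obtain ⟨b, hb, hmeet, hle⟩ := hucov z hz
    have htb := (ht b (huG hb)).1
    refine mem_biUnion hb (hengulf b (huG hb) (Q z) (t z / t b)
      ⟨div_nonneg (ht z hz).1.le htb.le, (div_le_iff₀ htb).2 hle⟩ hmeet ?_ (hzQ z hz))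
    rw [hQQ, hQQ, smul_smul, div_mul_cancel₀ _ htb.ne']
  calc
    μ G ≤ ∑' b : u, μ (Q' b) := (measure_mono hcover).trans (measure_biUnion_le μ hucount _)
    _ ≤ ∑' b : u, ENNReal.ofReal Δ ^ (n + 2) * C * μ (Q b ∩ V) := by
      refine ENNReal.tsum_le_tsum fun b ↦ (hQ' b (huG b.2)).trans ?_
      rw [mul_assoc]
      gcongr
      exact hV b (huG b.2)
    _ = ENNReal.ofReal Δ ^ (n + 2) * C * ∑' b : u, μ.restrict V (Q b) := by
      rw [ENNReal.tsum_mul_left]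
      congr! 3 with b
      exact (Measure.restrict_apply (h.isOpen (hQ b (huG b.2))).measurableSet).symm
    _ = ENNReal.ofReal Δ ^ (n + 2) * C * μ.restrict V (⋃ b ∈ u, Q b) := by
      rw [measure_biUnion hucount hudisj fun b hb ↦ (h.isOpen (hQ b (huG hb))).measurableSet]
    _ ≤ ENNReal.ofReal Δ ^ (n + 2) * C * μ V := by
      refine mul_le_mul_right ?_ _
      exact (measure_mono (subset_univ _)).trans_eq (Measure.restrict_apply_univ V)

end IsDoublingConvexBasis

end Doubling

section Halo

theorem one_sub_mul_le_measure_diff {X : Type*} [MeasurableSpace X] {μ : Measure X} {B E : Set X}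
    {γ : ℝ≥0∞} (hB : μ B ≠ ∞) (hE : MeasurableSet E) (hBE : μ (B ∩ E) ≤ γ * μ B) :
    (1 - γ) * μ B ≤ μ (B \ E) := by
  rw [ENNReal.sub_mul fun _ _ ↦ hB, one_mul, tsub_le_iff_left, ← measure_inter_add_sdiff B hE]
  gcongr
  rwa [measure_inter_add_sdiff B hE]

theorem setLIntegral_ofReal_abs_indicator_one {X : Type*} [MeasurableSpace X] (μ : Measure X)
    {E : Set X} (hE : MeasurableSet E) (B : Set X) :
    ∫⁻ y in B, ENNReal.ofReal |E.indicator 1 y| ∂μ = μ (B ∩ E) := by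
  have hind : (fun y ↦ ENNReal.ofReal |E.indicator (1 : X → ℝ) y|) = E.indicator 1 := by
    ext y
    by_cases hy : y ∈ E <;> simp [hy]
  rw [hind, lintegral_indicator_one hE, Measure.restrict_apply hE, inter_comm]

variable {n : ℕ} {μ ν : Measure (EuclideanSpace ℝ (Fin n))}
  {𝔅 : Set (Set (EuclideanSpace ℝ (Fin n)))} {B E : Set (EuclideanSpace ℝ (Fin n))}

/-- The halo of `E` at level `γ`: the superlevel set of the maximal function of `1_E` whose
`ν`-measure is controlled by the Tauberian condition. -/
def halo (μ : Measure (EuclideanSpace ℝ (Fin n))) (𝔅 : Set (Set (EuclideanSpace ℝ (Fin n))))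
    (γ : ℝ≥0∞) (E : Set (EuclideanSpace ℝ (Fin n))) : Set (EuclideanSpace ℝ (Fin n)) :=
  {x | γ < maxOp μ 𝔅 (E.indicator 1) x}

theorem isOpen_halo (h𝔅 : ∀ B ∈ 𝔅, IsOpen B) (γ : ℝ≥0∞) (E : Set (EuclideanSpace ℝ (Fin n))) :
    IsOpen (halo μ 𝔅 γ E) := by
  refine isOpen_iff_forall_mem_open.2 fun x hx ↦ ?_
  simp only [halo, maxOp, Set.mem_ofPred_eq, lt_iSup_iff] at hx
  obtain ⟨B, hB, hxB, hpos, hlt⟩ := hx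
  refine ⟨B, fun y hy ↦ ?_, h𝔅 B hB, hxB⟩
  simp only [halo, maxOp, Set.mem_ofPred_eq, lt_iSup_iff]
  exact ⟨B, hB, hy, hpos, hlt⟩

theorem subset_halo (hB : B ∈ 𝔅) (hfin : μ B ≠ ∞) (hE : MeasurableSet E) {γ : ℝ≥0∞}
    (hlt : γ * μ B < μ (B ∩ E)) : B ⊆ halo μ 𝔅 γ E := by
  intro x hx
  have hpos : 0 < μ B := (zero_le.trans_lt hlt).trans_le (measure_mono inter_subset_left)
  simp only [halo, maxOp, Set.mem_ofPred_eq, lt_iSup_iff]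
  refine ⟨B, hB, hx, hpos, ?_⟩
  rwa [setLIntegral_ofReal_abs_indicator_one μ hE,
    ENNReal.lt_div_iff_mul_lt (Or.inl hpos.ne') (Or.inl hfin)]

theorem measure_iterate_halo_le (h𝔅 : ∀ B ∈ 𝔅, IsOpen B) {γ c : ℝ}
    (htaub : TauberianCond μ ν 𝔅 γ c) (hE : MeasurableSet E) (k : ℕ) :
    ν ((halo μ 𝔅 (ENNReal.ofReal γ))^[k] E) ≤ ENNReal.ofReal c ^ k * ν E := by
  induction k generalizing E with
  | zero => simp
  | succ k ih =>
    calc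
      ν ((halo μ 𝔅 (ENNReal.ofReal γ))^[k] (halo μ 𝔅 (ENNReal.ofReal γ) E))
        ≤ ENNReal.ofReal c ^ k * ν (halo μ 𝔅 (ENNReal.ofReal γ) E) :=
        ih (isOpen_halo h𝔅 _ E).measurableSet
      _ ≤ ENNReal.ofReal c ^ k * (ENNReal.ofReal c * ν E) := by gcongr; exact htaub E hE
      _ = ENNReal.ofReal c ^ (k + 1) * ν E := by rw [pow_succ, mul_assoc]

namespace IsDoublingConvexBasis

variable [IsLocallyFiniteMeasure μ] {Δ : ℝ} {γ : ℝ≥0∞}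

theorem exists_homothety_image_subset_halo (h : IsDoublingConvexBasis μ 𝔅 Δ) (hμ : μ ≠ 0)
    (hγ : γ < 1) (hB : B ∈ 𝔅) (hE : MeasurableSet E) (hBE : μ (B ∩ E) ≤ γ * μ B)
    {z : EuclideanSpace ℝ (Fin n)} (hz : Tendsto
      (fun t : ℝ ↦ μ (homothety z t '' B \ E) / μ (homothety z t '' B)) (𝓝[>] 0) (𝓝 0)) :
    ∃ t ∈ Ioc (0 : ℝ) 1, homothety z t '' B ⊆ halo μ 𝔅 γ E ∧
      μ (homothety z t '' B) = ((1 - γ) / 2)⁻¹ * μ (homothety z t '' B \ E) := by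
  have hγ' : 1 - γ ≠ 0 := (tsub_pos_of_lt hγ).ne'
  have hδ : (1 - γ) / 2 ≠ 0 := ENNReal.div_ne_zero.2 ⟨hγ', ENNReal.ofNat_ne_top⟩
  have hδB : (1 - γ) / 2 ≤ μ (B \ E) / μ B := by
    rw [ENNReal.le_div_iff_mul_le (Or.inl (h.measure_pos hμ hB).ne')
      (Or.inl (h.measure_ne_top hB))]
    refine le_trans ?_ (one_sub_mul_le_measure_diff (h.measure_ne_top hB) hE hBE)
    gcongr
    exact ENNReal.half_le_self
  obtain ⟨t, ht, hratio⟩ :=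
    h.exists_measure_homothety_image_diff_div_eq hμ hB hz (pos_iff_ne_zero.2 hδ) hδB
  have hQ := h.homothety_image_mem hB z ht.1
  have hQ₀ := (h.measure_pos hμ hQ).ne'
  have hQ_top := h.measure_ne_top hQ
  have hdiff : μ (homothety z t '' B \ E) = (1 - γ) / 2 * μ (homothety z t '' B) := by
    rw [← hratio, ENNReal.div_mul_cancel hQ₀ hQ_top]
  refine ⟨t, ht, subset_halo hQ hQ_top hE ?_, ?_⟩
  · by_contra! hle
    have := one_sub_mul_le_measure_diff hQ_top hE hle
    rw [hdiff, ENNReal.mul_le_mul_iff_left hQ₀ hQ_top] at this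
    exact this.not_gt (ENNReal.half_lt_self hγ' (by finiteness))
  · rw [hdiff, ENNReal.inv_mul_cancel_left hδ (by finiteness)]

theorem exists_mul_measure_inter_le_measure_inter_halo (h : IsDoublingConvexBasis μ 𝔅 Δ)
    (hμ : μ ≠ 0) (hγ : γ < 1) :
    ∃ q > 1, ∀ B ∈ 𝔅, ∀ E, MeasurableSet E → μ (B ∩ E) ≤ γ * μ B →
      q * μ (B ∩ E) ≤ μ (B ∩ halo μ 𝔅 γ E) := by
  set C : ℝ≥0∞ := ((1 - γ) / 2)⁻¹
  have hC : C ≠ ∞ := ENNReal.inv_ne_top.2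
    (ENNReal.div_ne_zero.2 ⟨(tsub_pos_of_lt hγ).ne', ENNReal.ofNat_ne_top⟩)
  refine ⟨1 + (ENNReal.ofReal Δ ^ (n + 2) * C)⁻¹,
    ENNReal.lt_add_right ENNReal.one_ne_top (ENNReal.inv_ne_zero.2 (by finiteness)),
    fun B hB E hE hBE ↦ ?_⟩
  let G := {z ∈ B ∩ E | Tendsto
    (fun t : ℝ ↦ μ (homothety z t '' B \ E) / μ (homothety z t '' B)) (𝓝[>] 0) (𝓝 0)}
  have hG : μ (B ∩ E) ≤ μ G := by
    refine measure_mono_ae ?_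
    filter_upwards [(ae_restrict_iff' hE).1
      (h.ae_tendsto_measure_homothety_image_diff_div hμ hB hE)] with z hz hzBE
    exact ⟨hzBE, hz hzBE.2⟩
  have hG_halo : G ⊆ B ∩ halo μ 𝔅 γ E ∩ E := by
    rintro z ⟨hzBE, hz⟩
    obtain ⟨t, -, hhalo, -⟩ := h.exists_homothety_image_subset_halo hμ hγ hB hE hBE hz
    exact ⟨⟨hzBE.1, hhalo ⟨z, hzBE.1, AffineMap.homothety_apply_same z t⟩⟩, hzBE.2⟩
  have hG_new : μ G ≤ ENNReal.ofReal Δ ^ (n + 2) * C * μ ((B ∩ halo μ 𝔅 γ E) \ E) := by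
    refine h.measure_le_of_forall_exists_homothety_image hB (fun z hz ↦ hz.1.1) fun z hz ↦ ?_
    obtain ⟨t, ht, hhalo, hQ⟩ := h.exists_homothety_image_subset_halo hμ hγ hB hE hBE hz.2
    have hsub := homothety_image_subset (h.convex hB) (h.isOpen hB) (subset_closure hz.1.1)
      ht.1 ht.2
    refine ⟨t, ht, hQ.trans_le (mul_le_mul_right (measure_mono ?_) C)⟩
    exact fun x hx ↦ ⟨hx.1, ⟨hsub hx.1, hhalo hx.1⟩, hx.2⟩
  calc
    _ = μ (B ∩ E) + μ (B ∩ E) / (ENNReal.ofReal Δ ^ (n + 2) * C) := by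
      rw [add_mul, one_mul, mul_comm _⁻¹, ← div_eq_mul_inv]
    _ ≤ μ (B ∩ halo μ 𝔅 γ E ∩ E) + μ ((B ∩ halo μ 𝔅 γ E) \ E) :=
      add_le_add (hG.trans (measure_mono hG_halo))
        (ENNReal.div_le_of_le_mul' (hG.trans hG_new))
    _ = μ (B ∩ halo μ 𝔅 γ E) := measure_inter_add_sdiff _ hE

theorem subset_iterate_halo_of_lt_pow_mul (h : IsDoublingConvexBasis μ 𝔅 Δ) (hB : B ∈ 𝔅)
    {q : ℝ≥0∞} (hq : 1 ≤ q) (hgrow : ∀ E, MeasurableSet E → μ (B ∩ E) ≤ γ * μ B →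
      q * μ (B ∩ E) ≤ μ (B ∩ halo μ 𝔅 γ E))
    (hE : MeasurableSet E) (k : ℕ) (hlt : γ * μ B < q ^ k * μ (B ∩ E)) :
    B ⊆ (halo μ 𝔅 γ)^[k + 1] E := by
  induction k generalizing E with
  | zero => exact subset_halo hB (h.measure_ne_top hB) hE (by simpa using hlt)
  | succ k ih =>
    refine ih (isOpen_halo (fun _ ↦ h.isOpen) γ E).measurableSet ?_
    obtain hle | hgt := le_or_gt (μ (B ∩ E)) (γ * μ B)
    · rw [pow_succ, mul_assoc] at hlt
      exact hlt.trans_le (by gcongr; exact hgrow E hE hle)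
    · rw [inter_eq_left.2 (subset_halo hB (h.measure_ne_top hB) hE hgt)]
      calc γ * μ B < μ B := hgt.trans_le (measure_mono inter_subset_left)
        _ ≤ q ^ k * μ B := le_mul_of_one_le_left' (one_le_pow₀ hq)

theorem exists_subset_iterate_halo (h : IsDoublingConvexBasis μ 𝔅 Δ) (hμ : μ ≠ 0) (hγ : γ < 1)
    {ε : ℝ≥0∞} (hε : 0 < ε) :
    ∃ k, ∀ B ∈ 𝔅, ∀ E, MeasurableSet E → ε * μ B < μ (B ∩ E) → B ⊆ (halo μ 𝔅 γ)^[k] E := by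
  obtain ⟨q, hq, hgrow⟩ := h.exists_mul_measure_inter_le_measure_inter_halo hμ hγ
  obtain ⟨k, hk⟩ : ∃ k : ℕ, γ / ε < q ^ k :=
    ((ENNReal.tendsto_pow_atTop_nhds_top_iff.2 hq).eventually_const_lt
      (ENNReal.div_lt_top hγ.ne_top hε.ne')).exists
  refine ⟨k + 1, fun B hB E hE hlt ↦
    h.subset_iterate_halo_of_lt_pow_mul hB hq.le (hgrow B hB) hE k ?_⟩
  have hε_top : ε ≠ ∞ := by
    rintro rfl
    rw [ENNReal.top_mul (h.measure_pos hμ hB).ne'] at hlt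
    exact not_top_lt hlt
  calc
    γ * μ B = γ / ε * (ε * μ B) := by rw [← mul_assoc, ENNReal.div_mul_cancel hε.ne' hε_top]
    _ ≤ γ / ε * μ (B ∩ E) := by gcongr
    _ < q ^ k * μ (B ∩ E) :=
      (ENNReal.mul_lt_mul_iff_left (zero_le.trans_lt hlt).ne'
        (measure_ne_top_of_subset inter_subset_left (h.measure_ne_top hB))).2 hk

end IsDoublingConvexBasis

end Halo

section Average

variable {X F : Type*} [MeasurableSpace X] [NormedAddCommGroup F] [MeasurableSpace F]
  [BorelSpace F] [SecondCountableTopology F] [NormedSpace ℝ F] [CompleteSpace F] {f : X → F}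
  {M : ℝ}

theorem edist_integral_le_add_mul_measure {P : Measure X} [IsProbabilityMeasure P]
    (hf : Measurable f) (hM : ∀ x, ‖f x‖ ≤ M) (y : F) (ε : ℝ≥0∞) :
    edist (∫ x, f x ∂P) y ≤
      ε + (ENNReal.ofReal M + ‖y‖ₑ) * P (f ⁻¹' (Metric.eball y ε)ᶜ) := by
  set S := f ⁻¹' (Metric.eball y ε)ᶜ
  have hS : MeasurableSet S := hf Metric.isOpen_eball.measurableSet.compl
  have hfint : Integrable f P := .of_bound hf.aestronglyMeasurable M (ae_of_all _ hM)
  have hpoint (x : X) : ‖f x - y‖ₑ ≤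
      ε + S.indicator (fun _ ↦ ENNReal.ofReal M + ‖y‖ₑ) x := by
    by_cases hx : x ∈ S
    · have hMx : ‖f x‖ₑ ≤ ENNReal.ofReal M := by
        rw [← ofReal_norm]
        exact ENNReal.ofReal_le_ofReal (hM x)
      calc ‖f x - y‖ₑ ≤ ‖f x‖ₑ + ‖y‖ₑ := enorm_sub_le
        _ ≤ _ := by rw [indicator_of_mem hx]; exact (add_le_add_left hMx _).trans le_add_self
    · rw [indicator_of_notMem hx, add_zero, ← edist_eq_enorm_sub]
      exact (Metric.mem_eball.1 (not_not.1 hx)).le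
  calc
    edist (∫ x, f x ∂P) y = ‖∫ x, (f x - y) ∂P‖ₑ := by
      rw [edist_eq_enorm_sub, integral_sub hfint (integrable_const y), integral_const,
        probReal_univ, one_smul]
    _ ≤ ∫⁻ x, ‖f x - y‖ₑ ∂P := enorm_integral_le_lintegral_enorm _
    _ ≤ ∫⁻ x, (ε + S.indicator (fun _ ↦ ENNReal.ofReal M + ‖y‖ₑ) x) ∂P := lintegral_mono hpoint
    _ = ε + (ENNReal.ofReal M + ‖y‖ₑ) * P S := by
      rw [lintegral_add_left measurable_const, lintegral_indicator_const hS, lintegral_const,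
        measure_univ, mul_one]

theorem tendsto_setAverage_of_tendsto_measure_inter_div {μ : Measure X} {l : Filter (Set X)}
    (hf : Measurable f) (hM : ∀ x, ‖f x‖ ≤ M) (hl : ∀ᶠ B in l, μ B ≠ 0 ∧ μ B ≠ ∞) {y : F}
    (hy : ∀ U ∈ 𝓝 y, Tendsto (fun B ↦ μ (B ∩ f ⁻¹' Uᶜ) / μ B) l (𝓝 0)) :
    Tendsto (fun B ↦ ⨍ x in B, f x ∂μ) l (𝓝 y) := by
  refine tendsto_iff_edist_tendsto_0.2 (ENNReal.tendsto_nhds_zero.2 fun ε hε ↦ ?_)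
  have hdensity : Tendsto (fun B ↦ (ENNReal.ofReal M + ‖y‖ₑ) *
      (μ (B ∩ f ⁻¹' (Metric.eball y (ε / 2))ᶜ) / μ B)) l (𝓝 0) := by
    simpa using ENNReal.Tendsto.const_mul (hy _ (Metric.eball_mem_nhds y (ENNReal.half_pos hε.ne')))
      (Or.inr (by finiteness))
  filter_upwards [ENNReal.tendsto_nhds_zero.1 hdensity _ (ENNReal.half_pos hε.ne'), hl]
    with B hB ⟨hB₀, hB_top⟩
  have : IsFiniteMeasure (μ.restrict B) := ⟨by simpa using hB_top.lt_top⟩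
  have : NeZero (μ.restrict B) := ⟨by simpa using hB₀⟩
  refine (edist_integral_le_add_mul_measure hf hM y (ε / 2)).trans ?_
  rw [Measure.smul_apply, Measure.restrict_apply_univ, Measure.restrict_apply
    (hf Metric.isOpen_eball.measurableSet.compl), smul_eq_mul, inter_comm, mul_comm (μ B)⁻¹,
    ← div_eq_mul_inv]
  calc
    _ ≤ ε / 2 + ε / 2 := by gcongr
    _ = ε := ENNReal.add_halves ε

end Average

section Differentiation

/-- The sets of `𝔅` containing `x` and shrinking to `x`: differentiation with respect to `𝔅` at
`x` is convergence along this filter. -/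
def contractingFilter {X : Type*} [TopologicalSpace X] (𝔅 : Set (Set X)) (x : X) :
    Filter (Set X) :=
  (𝓝 x).smallSets ⊓ 𝓟 {B | B ∈ 𝔅 ∧ x ∈ B}

theorem eventually_contractingFilter {X : Type*} [TopologicalSpace X] (𝔅 : Set (Set X)) {x : X}
    {s : Set X} (hs : s ∈ 𝓝 x) : ∀ᶠ B in contractingFilter 𝔅 x, B ∈ 𝔅 ∧ x ∈ B ∧ B ⊆ s := by
  filter_upwards [mem_inf_of_left (eventually_smallSets.2 ⟨s, hs, fun _ h ↦ h⟩),
    mem_inf_of_right (mem_principal_self _)] with B hBs hB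
  exact ⟨hB.1, hB.2, hBs⟩

theorem tendsto_contractingFilter {X ι : Type*} [PseudoEMetricSpace X] {𝔅 : Set (Set X)} {x : X}
    {B : ι → Set X} {l : Filter ι} (hB : ∀ i, B i ∈ 𝔅) (hx : ∀ i, x ∈ B i)
    (hdiam : Tendsto (fun i ↦ Metric.ediam (B i)) l (𝓝 0)) :
    Tendsto B l (contractingFilter 𝔅 x) := by
  refine tendsto_inf.2 ⟨tendsto_smallSets_iff.2 fun s hs ↦ ?_,
    tendsto_principal.2 (.of_forall fun i ↦ ⟨hB i, hx i⟩)⟩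
  obtain ⟨ε, hε, hεs⟩ := EMetric.mem_nhds_iff.1 hs
  filter_upwards [hdiam.eventually_lt_const hε] with i hi y hy
  exact hεs ((Metric.edist_le_ediam_of_mem hy (hx i)).trans_lt hi)

variable {n : ℕ} {μ ν : Measure (EuclideanSpace ℝ (Fin n))} [IsLocallyFiniteMeasure μ]
  [IsLocallyFiniteMeasure ν] {𝔅 : Set (Set (EuclideanSpace ℝ (Fin n)))}
  {E : Set (EuclideanSpace ℝ (Fin n))} {Δ γ c : ℝ}

namespace IsDoublingConvexBasis

/- Up to a closed set avoided by small `B ∋ x`, the set `E` has small `ν`-measure, and so has the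
iterated halo which contains every `x` failing the conclusion. -/
theorem ae_eventually_measure_inter_le_of_ne_top (h : IsDoublingConvexBasis μ 𝔅 Δ) (hμ : μ ≠ 0)
    (hγ : γ < 1) (htaub : TauberianCond μ ν 𝔅 γ c) (hE : MeasurableSet E) (hνE : ν E ≠ ∞)
    {ε : ℝ≥0∞} (hε : 0 < ε) :
    ∀ᵐ x ∂ν, x ∉ E → ∀ᶠ B in contractingFilter 𝔅 x, μ (B ∩ E) ≤ ε * μ B := by
  obtain ⟨k, hk⟩ := h.exists_subset_iterate_halo hμ (ENNReal.ofReal_lt_one.2 hγ) hε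
  rw [ae_iff]
  by_contra hbad
  obtain ⟨δ, hδ, hδ_lt⟩ :=
    ENNReal.exists_nnreal_pos_mul_lt (a := ENNReal.ofReal c ^ k) (by finiteness) hbad
  obtain ⟨K, hKE, hK, hνK⟩ := hE.exists_isClosed_sdiff_lt hνE (ENNReal.coe_pos.2 hδ).ne'
  refine hδ_lt.not_ge ?_
  have hsub : {x | ¬(x ∉ E → ∀ᶠ B in contractingFilter 𝔅 x, μ (B ∩ E) ≤ ε * μ B)} ⊆
      (halo μ 𝔅 (ENNReal.ofReal γ))^[k] (E \ K) := by
    intro x hx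
    obtain ⟨hxE, hfreq⟩ := Classical.not_imp.1 hx
    obtain ⟨B, hlt, hB, hxB, hBK⟩ := ((not_eventually.1 hfreq).and_eventually
      (eventually_contractingFilter 𝔅 (hK.isOpen_compl.mem_nhds (notMem_subset hKE hxE)))).exists
    have hBE : B ∩ E = B ∩ (E \ K) := by
      rw [Set.sdiff_eq, ← inter_assoc, inter_right_comm, inter_eq_left.2 hBK]
    rw [not_le, hBE] at hlt
    exact hk B hB _ (hE.diff hK.measurableSet) hlt hxB
  calc
    _ ≤ ν ((halo μ 𝔅 (ENNReal.ofReal γ))^[k] (E \ K)) := measure_mono hsub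
    _ ≤ ENNReal.ofReal c ^ k * ν (E \ K) :=
      measure_iterate_halo_le (fun _ ↦ h.isOpen) htaub (hE.diff hK.measurableSet) k
    _ ≤ δ * ENNReal.ofReal c ^ k := by rw [mul_comm]; gcongr

theorem ae_tendsto_measure_inter_div (h : IsDoublingConvexBasis μ 𝔅 Δ) (hμ : μ ≠ 0)
    (hγ : γ < 1) (htaub : TauberianCond μ ν 𝔅 γ c) (hE : MeasurableSet E) :
    ∀ᵐ x ∂ν, x ∉ E →
      Tendsto (fun B ↦ μ (B ∩ E) / μ B) (contractingFilter 𝔅 x) (𝓝 0) := by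
  have hball (i j : ℕ) : ∀ᵐ x ∂ν, x ∉ E ∩ Metric.ball 0 j →
      ∀ᶠ B in contractingFilter 𝔅 x, μ (B ∩ (E ∩ Metric.ball 0 j)) ≤ (i : ℝ≥0∞)⁻¹ * μ B :=
    h.ae_eventually_measure_inter_le_of_ne_top hμ hγ htaub (hE.inter measurableSet_ball)
      (measure_ne_top_of_subset inter_subset_right measure_ball_lt_top.ne)
      (ENNReal.inv_pos.2 (ENNReal.natCast_ne_top i))
  filter_upwards [ae_all_iff.2 fun i ↦ ae_all_iff.2 (hball i)] with x hx hxE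
  refine ENNReal.tendsto_nhds_zero.2 fun ε hε ↦ ?_
  obtain ⟨i, hi⟩ := ENNReal.exists_inv_nat_lt hε.ne'
  obtain ⟨j, hj⟩ := exists_nat_gt ‖x‖
  filter_upwards [hx i j fun hx' ↦ hxE hx'.1, eventually_contractingFilter 𝔅
    (Metric.isOpen_ball.mem_nhds (mem_ball_zero_iff.2 hj))] with B hle ⟨hB, _, hB_ball⟩
  rw [inter_comm E, ← inter_assoc, inter_eq_left.2 hB_ball] at hle
  exact ENNReal.div_le_of_le_mul (hle.trans (by gcongr))

theorem ae_tendsto_measure_inter_preimage_compl_div (h : IsDoublingConvexBasis μ 𝔅 Δ) (hμ : μ ≠ 0)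
    (hγ : γ < 1) (htaub : TauberianCond μ ν 𝔅 γ c) {F : Type*} [TopologicalSpace F]
    [SecondCountableTopology F] [MeasurableSpace F] [OpensMeasurableSpace F]
    {f : EuclideanSpace ℝ (Fin n) → F} (hf : Measurable f) :
    ∀ᵐ x ∂ν, ∀ U ∈ 𝓝 (f x),
      Tendsto (fun B ↦ μ (B ∩ f ⁻¹' Uᶜ) / μ B) (contractingFilter 𝔅 x) (𝓝 0) := by
  have hbasis := TopologicalSpace.isBasis_countableBasis F
  have hdensity : ∀ᵐ x ∂ν, ∀ V ∈ TopologicalSpace.countableBasis F, x ∉ f ⁻¹' Vᶜ →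
      Tendsto (fun B ↦ μ (B ∩ f ⁻¹' Vᶜ) / μ B) (contractingFilter 𝔅 x) (𝓝 0) :=
    (ae_ball_iff (TopologicalSpace.countable_countableBasis F)).2 fun V hV ↦
      h.ae_tendsto_measure_inter_div hμ hγ htaub (hf (hbasis.isOpen hV).measurableSet.compl)
  filter_upwards [hdensity] with x hx U hU
  obtain ⟨V, hV, hxV, hVU⟩ := hbasis.mem_nhds_iff.1 hU
  refine tendsto_of_tendsto_of_tendsto_of_le_of_le tendsto_const_nhds
    (hx V hV (not_not.2 hxV)) (fun B ↦ zero_le) fun B ↦ ?_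
  gcongr

end IsDoublingConvexBasis

theorem statement2_general (hB : ∀ B ∈ 𝔅, IsConvexBasisSet B) (hhom : HomothecyInvariant 𝔅)
    (hμ : μ ≠ 0) (hdbl : DoublingWrt μ 𝔅 Δ) (hγ : γ < 1) (htaub : TauberianCond μ ν 𝔅 γ c)
    {F : Type*} [NormedAddCommGroup F] [NormedSpace ℝ F] [CompleteSpace F]
    [SecondCountableTopology F] [MeasurableSpace F] [BorelSpace F]
    {f : EuclideanSpace ℝ (Fin n) → F} (hf : Measurable f) {M : ℝ} (hM : ∀ x, ‖f x‖ ≤ M) :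
    ∀ᵐ x ∂ν, Tendsto (fun B ↦ ⨍ y in B, f y ∂μ) (contractingFilter 𝔅 x) (𝓝 (f x)) := by
  have h : IsDoublingConvexBasis μ 𝔅 Δ := ⟨hB, hhom, hdbl⟩
  filter_upwards [h.ae_tendsto_measure_inter_preimage_compl_div hμ hγ htaub hf] with x hx
  refine tendsto_setAverage_of_tendsto_measure_inter_div hf hM ?_ hx
  filter_upwards [eventually_contractingFilter 𝔅 univ_mem] with B ⟨hB, _⟩
  exact ⟨(h.measure_pos hμ hB).ne', h.measure_ne_top hB⟩

end Differentiation

/-- If the Tauberian condition at level `1/2` holds for `M_{𝔅,μ}` with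
respect to `ν`, then `𝔅` differentiates `L^∞(ν)` with respect to `μ`: for every bounded
Borel measurable `f`, for `ν`-a.e. `x`, every sequence of sets of `𝔅` containing `x`, of
positive `μ`-measure and with diameters tending to `0`, has `μ`-averages of `f`
converging to `f x`. -/
theorem statement2 (n : ℕ) (𝔅 : Set (Set (EuclideanSpace ℝ (Fin n))))
    (hB : ∀ B ∈ 𝔅, IsConvexBasisSet B) (hhom : HomothecyInvariant 𝔅)
    (μ ν : Measure (EuclideanSpace ℝ (Fin n)))
    (hlocμ : IsLocallyFiniteMeasure μ) (hlocν : IsLocallyFiniteMeasure ν)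
    (hμ : μ ≠ 0) (hdbl : ∃ Δ : ℝ, 1 < Δ ∧ DoublingWrt μ 𝔅 Δ)
    (htaub : ∃ c : ℝ, 0 < c ∧ ∀ E : Set (EuclideanSpace ℝ (Fin n)), MeasurableSet E →
      ν {x | (1 / 2 : ℝ≥0∞) < maxOp μ 𝔅 (E.indicator 1) x} ≤ ENNReal.ofReal c * ν E)
    (f : EuclideanSpace ℝ (Fin n) → ℝ) (hf : Measurable f)
    (hfbd : ∃ M : ℝ, ∀ x, |f x| ≤ M) :
    ∀ᵐ x ∂ν, ∀ B : ℕ → Set (EuclideanSpace ℝ (Fin n)),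
      (∀ k, B k ∈ 𝔅) → (∀ k, x ∈ B k) → (∀ k, 0 < μ (B k)) →
      Tendsto (fun k => EMetric.diam (B k)) atTop (𝓝 0) →
      Tendsto (fun k => (∫ y in B k, f y ∂μ) / (μ (B k)).toReal) atTop (𝓝 (f x)) := by
  obtain ⟨Δ, -, hΔ⟩ := hdbl
  obtain ⟨c, -, hc⟩ := htaub
  obtain ⟨M, hM⟩ := hfbd
  have htaub : TauberianCond μ ν 𝔅 (1 / 2) c := by
    simpa only [TauberianCond, ENNReal.ofReal_div_of_pos zero_lt_two, ENNReal.ofReal_one,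
      ENNReal.ofReal_ofNat] using hc
  filter_upwards [statement2_general hB hhom hμ hΔ one_half_lt_one htaub hf hM]
    with x hx B hB𝔅 hxB _ hdiam
  simpa only [Function.comp_def, setAverage_eq, smul_eq_mul, ← div_eq_inv_mul,
    Measure.real] using hx.comp (tendsto_contractingFilter hB𝔅 hxB hdiam)
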